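/- Let n ≥ 2 and let g : ℝⁿ → ℝ be continuous and compactly supported. Then for every x ∈ ℝⁿ, the linearization of the single pixel X-ray transform at the zero function equals minus the normal operator: lim_{ε→0} ε^{-1} ( K[εg](x) − |S^{n-1}| ) = − X'Xg(x). -/

import Mathlib

open MeasureTheory Metric Real

/-- The `n`-dimensional Euclidean space. -/
abbrev Euc (n : ℕ) := EuclideanSpace ℝ (Fin n)

/-- The standard surface measure on the unit sphere `S^{n-1} ⊂ ℝⁿ`. -/
noncomputable def sphereMeasure (n : ℕ) : Measure (sphere (0 : Euc n) 1) :=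
  (volume : Measure (Euc n)).toSphere

/-- The surface measure `|S^{n-1}|` of the unit sphere in `ℝⁿ`. -/
noncomputable def sphereVol (n : ℕ) : ℝ := (sphereMeasure n Set.univ).toReal

/-- The X-ray transform `Xf(x,θ) = ∫_ℝ f(x+sθ) ds`. -/
noncomputable def Xray {n : ℕ} (f : Euc n → ℝ) (x θ : Euc n) : ℝ :=
  ∫ s : ℝ, f (x + s • θ)

/-- The normal operator `X'Xf(x) = ∫_{S^{n-1}} Xf(x,θ) dθ`. -/
noncomputable def normalOp {n : ℕ} (f : Euc n → ℝ) (x : Euc n) : ℝ :=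
  ∫ θ : sphere (0 : Euc n) 1, Xray f x (θ : Euc n) ∂(sphereMeasure n)

/-- The single pixel X-ray transform `Kf(x) = ∫_{S^{n-1}} e^{-Xf(x,θ)} dθ`. -/
noncomputable def singlePixel {n : ℕ} (f : Euc n → ℝ) (x : Euc n) : ℝ :=
  ∫ θ : sphere (0 : Euc n) 1, Real.exp (-(Xray f x (θ : Euc n))) ∂(sphereMeasure n)

/-- The Fourier transform `𝓕f(ξ) = ∫ e^{-i x·ξ} f(x) dx`. -/
noncomputable def FT {n : ℕ} (f : Euc n → ℝ) (ξ : Euc n) : ℂ :=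
  ∫ x : Euc n, Complex.exp (-(Complex.I * ((inner ℝ x ξ : ℝ) : ℂ))) * (f x : ℂ)

/-- The inverse Fourier transform `𝓕⁻¹g(x) = (2π)^{-n} ∫ e^{i x·ξ} g(ξ) dξ`. -/
noncomputable def invFT {n : ℕ} (g : Euc n → ℂ) (x : Euc n) : ℂ :=
  ((((2 * π) ^ n)⁻¹ : ℝ) : ℂ) * ∫ ξ : Euc n, Complex.exp (Complex.I * ((inner ℝ x ξ : ℝ) : ℂ)) * g ξ

/-- The `L²(ℝⁿ)` norm `(∫ |f|²)^{1/2}`. -/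
noncomputable def L2norm {n : ℕ} (f : Euc n → ℝ) : ℝ :=
  (∫ x : Euc n, f x ^ 2) ^ ((1 : ℝ) / 2)

/-- The `H¹(U)` norm `(∫_U |u|²)^{1/2} + (∫_U |∇u|²)^{1/2}`. -/
noncomputable def H1norm {n : ℕ} (U : Set (Euc n)) (u : Euc n → ℝ) : ℝ :=
  (∫ x in U, u x ^ 2) ^ ((1 : ℝ) / 2) + (∫ x in U, ‖fderiv ℝ u x‖ ^ 2) ^ ((1 : ℝ) / 2)

/-- The X-ray transform of a continuous compactly supported function is continuous in the
direction. -/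
theorem continuous_Xray_sphere {n : ℕ} {g : Euc n → ℝ} (hg : Continuous g)
    (hgc : HasCompactSupport g) (x : Euc n) :
    Continuous fun θ : sphere (0 : Euc n) 1 => Xray g x (θ : Euc n) := by
  obtain ⟨R, hR⟩ := hgc.isCompact.isBounded.subset_closedBall (0 : Euc n)
  have h_eq : ∀ θ : sphere (0 : Euc n) 1,
      Xray g x (θ : Euc n) = ∫ s in Set.Icc (-(R + ‖x‖)) (R + ‖x‖), g (x + s • (θ : Euc n)) := by
    intro θ
    refine (setIntegral_eq_integral_of_forall_compl_eq_zero fun s hs => ?_).symm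
    by_contra h
    have h_norm : ‖x + s • (θ : Euc n)‖ ≤ R := by
      simpa using hR (subset_tsupport g h)
    have h_smul : ‖s • (θ : Euc n)‖ = |s| := by
      rw [norm_smul, norm_eq_of_mem_sphere, mul_one, Real.norm_eq_abs]
    have h_abs : |s| ≤ R + ‖x‖ := by
      rw [← h_smul]
      calc ‖s • (θ : Euc n)‖ = ‖(x + s • (θ : Euc n)) - x‖ := by rw [add_sub_cancel_left]
        _ ≤ ‖x + s • (θ : Euc n)‖ + ‖x‖ := norm_sub_le _ _
        _ ≤ R + ‖x‖ := by gcongr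
    exact hs (abs_le.mp h_abs)
  simp_rw [h_eq]
  exact continuous_parametric_integral_of_continuous (by fun_prop) isCompact_Icc

/-- The derivative at zero of `ε ↦ ∫ exp (-ε c)` is `-∫ c` for bounded `c` and finite measure. -/
theorem hasDerivAt_integral_exp_neg_mul {α : Type*} [MeasurableSpace α] {μ : Measure α}
    [IsFiniteMeasure μ] {c : α → ℝ} (hc : AEStronglyMeasurable c μ) {M : ℝ}
    (hM : ∀ a, |c a| ≤ M) :
    HasDerivAt (fun ε : ℝ => ∫ a, exp (-(ε * c a)) ∂μ) (-∫ a, c a ∂μ) 0 := by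
  have h_meas : ∀ ε : ℝ, AEStronglyMeasurable (fun a => exp (-(ε * c a))) μ := fun ε =>
    continuous_exp.comp_aestronglyMeasurable (hc.const_mul ε).neg
  have h := (hasDerivAt_integral_of_dominated_loc_of_deriv_le (μ := μ) (x₀ := (0 : ℝ))
    (F := fun ε a => exp (-(ε * c a))) (F' := fun ε a => exp (-(ε * c a)) * -c a)
    (bound := fun _ => exp M * M) (ball_mem_nhds 0 one_pos)
    (Filter.Eventually.of_forall h_meas) (by simp) ((h_meas 0).mul hc.neg)
    (Filter.Eventually.of_forall fun a ε hε => ?_) (integrable_const _)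
    (Filter.Eventually.of_forall fun a ε _ => ?_)).2
  · simpa [integral_neg] using h
  · have h_eps : |ε| ≤ 1 := by simpa using (mem_ball.mp hε).le
    have h_le : -(ε * c a) ≤ M := calc
      -(ε * c a) ≤ |ε * c a| := neg_le_abs _
      _ = |ε| * |c a| := abs_mul _ _
      _ ≤ 1 * |c a| := by gcongr
      _ ≤ M := by simpa using hM a
    rw [norm_mul, norm_neg, Real.norm_eq_abs, Real.norm_eq_abs, abs_exp]
    exact mul_le_mul (exp_le_exp.mpr h_le) (hM a) (abs_nonneg _) (exp_pos _).le
  · simpa using ((hasDerivAt_id ε).mul_const (c a)).neg.exp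

/-- For `n ≥ 2` and `g` continuous with compact support, the linearization of the
single pixel X-ray transform at zero is minus the normal operator:
`lim_{ε→0} ε⁻¹ (K[εg](x) − |S^{n-1}|) = −X'Xg(x)`. -/
theorem singlePixel_linearization (n : ℕ) (hn : 2 ≤ n) (g : Euc n → ℝ)
    (hg : Continuous g) (hgc : HasCompactSupport g) (x : Euc n) :
    Filter.Tendsto (fun ε : ℝ => ε⁻¹ * (singlePixel (fun y => ε * g y) x - sphereVol n))
      (nhdsWithin 0 {(0 : ℝ)}ᶜ) (nhds (-(normalOp g x))) := by
  have h_cont := continuous_Xray_sphere hg hgc x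
  obtain ⟨M, hM⟩ := isCompact_univ.exists_bound_of_continuousOn h_cont.continuousOn
  have : IsFiniteMeasure (sphereMeasure n) := by
    unfold sphereMeasure
    infer_instance
  have h := hasDerivAt_iff_tendsto_slope_zero.mp (hasDerivAt_integral_exp_neg_mul
    (μ := sphereMeasure n) h_cont.aestronglyMeasurable fun θ => hM θ (Set.mem_univ θ))
  simpa [singlePixel, normalOp, sphereVol, Xray, integral_const_mul, Measure.real] using h
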